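/- (Triviality, divergent form) Let p ∈ (1,∞), l ∈ (0,p), n ∈ [1,∞) real, R ∈ (0,∞]. Let φ : ℝ → ℝ be continuous and odd with τφ(τ) > 0 for a.e. τ. Let a be locally absolutely continuous on [0,R) with a > 0 a.e., let d_a(τ) := (n−1)a(τ)/τ + (1/p)a'(τ) satisfy d_a > 0 a.e. with d_a and d_a^{−1/(p−1)} locally integrable on [0,R). Let h : (0,R) × ℝ² → ℝ be a Carathéodory function such that for some θ ∈ (0,1] and a non-negative measurable q locally integrable on [0,R): h(τ,λ₀,λ₁)λ₁ ≤ θ q(τ)|λ₀|^l |λ₁|^{p−l} + (1−θ) d_a(τ)|λ₁|^p for all λ₀, λ₁ ∈ ℝ and a.e. τ. Assume K(0,r,q,d_a) < ∞ for every r ∈ (0,R). Let u be locally absolutely continuous on (0,R) with Φ_p(u') locally absolutely continuous on [0,R), u(0) = 0, and suppose u solves the divergent ODE: (a(τ)Φ_p(u'(τ)))' + (n−1)(a(τ)/τ)Φ_p(u'(τ)) − h(τ,u(τ),u'(τ)) + φ(u(τ)) = 0 for a.e. τ ∈ (0,R). If a(0) = 0 or u'(0) = 0, then u ≡ 0 on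 [0,R). -/

import Mathlib

open MeasureTheory Set Filter
open scoped ENNReal

/-- `Φ_p(λ) = |λ|^{p-2} λ` for `λ ≠ 0`, and `Φ_p(0) = 0`. -/
noncomputable def PhiP (p x : ℝ) : ℝ := if x = 0 then 0 else |x| ^ (p - 2) * x

/-- `u` is absolutely continuous on `[s,t]` with a.e. derivative `u'`:
`u'` is integrable on `[s,t]` and the fundamental theorem of calculus holds. -/
def ACOn (u u' : ℝ → ℝ) (s t : ℝ) : Prop :=
  MeasureTheory.IntegrableOn u' (Set.Icc s t) ∧
    ∀ x ∈ Set.Icc s t, u x = u s + ∫ σ in s..x, u' σ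

/-- The Beesack–Das constant
`K(s,·,q,v) = ((p-l)/p)^{(p-l)/p} [∫_S q(t)^{p/l} v(t)^{-(p-l)/l}
  (∫_s^t v(σ)^{-1/(p-1)} dσ)^{p-1} dt]^{l/p}`, over a set `S`. -/
noncomputable def BDK (p l : ℝ) (q v : ℝ → ℝ) (s : ℝ) (S : Set ℝ) : ℝ≥0∞ :=
  ENNReal.ofReal (((p - l) / p) ^ ((p - l) / p)) *
    (∫⁻ t in S,
      ENNReal.ofReal (q t) ^ (p / l) * ENNReal.ofReal (v t) ^ (-((p - l) / l)) *
        (∫⁻ σ in Set.Ioc s t, ENNReal.ofReal (v σ) ^ (-(1 / (p - 1)))) ^ (p - 1)) ^ (l / p)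

/-- `δ_a(τ) = (n-1) a(τ)/τ - (1 - 1/p) a'(τ)`. -/
noncomputable def deltaA (n p : ℝ) (a a' : ℝ → ℝ) : ℝ → ℝ :=
  fun τ => (n - 1) * a τ / τ - (1 - 1 / p) * a' τ

/-- `d_a(τ) = (n-1) a(τ)/τ + (1/p) a'(τ)`. -/
noncomputable def dA (n p : ℝ) (a a' : ℝ → ℝ) : ℝ → ℝ :=
  fun τ => (n - 1) * a τ / τ + (1 / p) * a' τ

/-! Multiplying the equation by `u'` shows that the energy
`E = (1 - 1/p) a |u'|^p + ∫₀^u φ` satisfies `E' = h(τ,u,u') u' - d_a |u'|^p`. It vanishes at `0`, so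
the growth condition gives `∫₀^{u(r)} φ ≤ E(r) ≤ θ (∫₀^r q |u|^l |u'|^{p-l} - ∫₀^r d_a |u'|^p)`. If
`u` vanishes on `[0, s]`, a Beesack–Das type inequality bounds the first integral by `C^{l/p}` times
the second one, where `C` is the integral over `(s, r]` of the density defining the constant `K`.
Finiteness of `K` makes `C ≤ 1` as soon as `r - s` is small, uniformly in `s`; then
`∫₀^{u(r)} φ ≤ 0`, which forces `u(r) = 0`, and finitely many steps of uniform length reach every
point of the interval. -/

section Continuation

theorem forall_mem_Icc_of_uniform_step {a b δ : ℝ} {P : ℝ → Prop} (hδ : 0 < δ) (ha : P a)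
    (hstep : ∀ s ∈ Icc a b, ∀ x ∈ Ioc s b, x - s ≤ δ → (∀ t ∈ Icc a s, P t) → P x) :
    ∀ x ∈ Icc a b, P x := by
  have hind (k : ℕ) : ∀ x ∈ Icc a b, x ≤ a + k * δ → P x := by
    induction k with
    | zero =>
      intro x hx hxa
      rwa [le_antisymm (by simpa using hxa) hx.1]
    | succ k ih =>
      intro x hx hxk
      rcases le_or_gt x (a + k * δ) with hle | hlt
      · exact ih x hx hle
      · have hs : a ≤ a + k * δ := le_add_of_nonneg_right (by positivity)
        refine hstep _ ⟨hs, hlt.le.trans hx.2⟩ x ⟨hlt, hx.2⟩ ?_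
          fun t ht => ih t ⟨ht.1, ht.2.trans (hlt.le.trans hx.2)⟩ ht.2
        push_cast at hxk
        linarith
  intro x hx
  obtain ⟨k, hk⟩ := exists_nat_ge ((x - a) / δ)
  rw [div_le_iff₀ hδ] at hk
  exact hind k x hx (by linarith)

theorem exists_pos_forall_setLIntegral_Ioc_le {f : ℝ → ℝ≥0∞} {a b : ℝ} {ε : ℝ≥0∞}
    (hf : ∫⁻ t in Ioc a b, f t ≠ ⊤) (hε : ε ≠ 0) :
    ∃ δ > 0, ∀ s x : ℝ, a ≤ s → x ≤ b → x - s ≤ δ → ∫⁻ t in Ioc s x, f t ≤ ε := by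
  obtain ⟨δ, hδ, hsmall⟩ := exists_pos_setLIntegral_lt_of_measure_lt hf hε
  obtain ⟨d, hd0, hdδ⟩ := ENNReal.lt_iff_exists_nnreal_btwn.mp hδ
  refine ⟨d, by exact_mod_cast hd0, fun s x has hxb hsx => ?_⟩
  have hvol : volume.restrict (Ioc a b) (Ioc s x) < δ := calc
    _ ≤ volume (Ioc s x) := Measure.restrict_apply_le _ _
    _ ≤ d := by
      rw [Real.volume_Ioc, ← ENNReal.ofReal_coe_nnreal]
      exact ENNReal.ofReal_le_ofReal hsx
    _ < δ := hdδ
  have hlt := hsmall _ hvol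
  rw [Measure.restrict_restrict_of_subset (Ioc_subset_Ioc has hxb)] at hlt
  exact hlt.le

end Continuation

section Sign

theorem nonneg_on_Icc_of_ae_nonneg {f : ℝ → ℝ} {a b : ℝ} (hab : a < b)
    (hf : ContinuousOn f (Icc a b)) (hpos : ∀ᵐ x ∂volume.restrict (Ioc a b), 0 ≤ f x) :
    ∀ x ∈ Icc a b, 0 ≤ f x := by
  have hmax : f =ᵐ[volume.restrict (Icc a b)] fun x => max (f x) 0 := by
    rw [← restrict_Ioc_eq_restrict_Icc]
    exact hpos.mono fun x hx => (max_eq_left hx).symm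
  have heq := Measure.eqOn_Icc_of_ae_eq volume hab.ne hmax hf (hf.sup continuousOn_const)
  exact fun x hx => max_eq_left_iff.mp (heq hx).symm

theorem intervalIntegral_pos_of_ae_pos {f : ℝ → ℝ} {a b : ℝ} (hab : a < b)
    (hfi : IntervalIntegrable f volume a b) (hpos : ∀ᵐ x ∂volume.restrict (Ioc a b), 0 < f x) :
    0 < ∫ x in a..b, f x := by
  rw [intervalIntegral.integral_of_le hab.le]
  rw [intervalIntegrable_iff_integrableOn_Ioc_of_le hab.le] at hfi
  refine (integral_pos_iff_support_of_nonneg_ae (hpos.mono fun _ h => h.le) hfi).mpr ?_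
  have hsupp : Function.support f =ᵐ[volume.restrict (Ioc a b)] univ :=
    eventuallyEq_univ.mpr (hpos.mono fun _ h => h.ne')
  rw [measure_congr hsupp]
  simpa using hab

theorem intervalIntegral_zero_pos_of_ae_mul_pos {φ : ℝ → ℝ} {x : ℝ} (hx : x ≠ 0)
    (hφ : IntervalIntegrable φ volume 0 x) (hsign : ∀ᵐ t : ℝ, 0 < t * φ t) :
    0 < ∫ t in 0..x, φ t := by
  rcases hx.lt_or_gt with hneg | hpos
  · rw [intervalIntegral.integral_symm, ← intervalIntegral.integral_neg]
    refine intervalIntegral_pos_of_ae_pos hneg hφ.symm.neg ?_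
    filter_upwards [ae_restrict_of_ae hsign, ae_restrict_mem measurableSet_Ioc] with t ht htx
    exact neg_pos.mpr (neg_of_mul_pos_right ht htx.2)
  · refine intervalIntegral_pos_of_ae_pos hpos hφ ?_
    filter_upwards [ae_restrict_of_ae hsign, ae_restrict_mem measurableSet_Ioc] with t ht htx
    exact pos_of_mul_pos_right ht htx.1.le

end Sign

section AbsoluteContinuity

variable {X Y : Type*} [PseudoMetricSpace X] [PseudoMetricSpace Y] {a b : ℝ}

theorem absolutelyContinuousOnInterval_of_dist_le_mul {f : ℝ → X} {g : ℝ → Y} (K : NNReal)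
    (hf : AbsolutelyContinuousOnInterval f a b)
    (hfg : ∀ x ∈ uIcc a b, ∀ y ∈ uIcc a b, dist (g x) (g y) ≤ K * dist (f x) (f y)) :
    AbsolutelyContinuousOnInterval g a b := by
  refine squeeze_zero' (Eventually.of_forall fun E => Finset.sum_nonneg fun _ _ => dist_nonneg) ?_
    (by simpa using Tendsto.const_mul (K : ℝ) hf)
  filter_upwards [mem_inf_of_right (mem_principal_self _)] with E hE
  rw [Finset.mul_sum]
  exact Finset.sum_le_sum fun i hi => hfg _ (hE.1 i hi).1 _ (hE.1 i hi).2

theorem absolutelyContinuousOnInterval_comp_of_locallyLipschitz {F : Type*}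
    [SeminormedAddCommGroup F] {f : ℝ → F} {g : F → Y}
    (hg : LocallyLipschitz g) (hf : AbsolutelyContinuousOnInterval f a b) :
    AbsolutelyContinuousOnInterval (fun x => g (f x)) a b := by
  obtain ⟨K, hK⟩ := (hg.locallyLipschitzOn (s := f '' uIcc a b)).exists_lipschitzOnWith_of_compact
    (isCompact_uIcc.image_of_continuousOn hf.continuousOn)
  refine absolutelyContinuousOnInterval_of_dist_le_mul K hf fun x hx y hy => ?_
  exact hK.dist_le_mul (f x) (mem_image_of_mem f hx) (f y) (mem_image_of_mem f hy)

namespace ACOn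

variable {f f' : ℝ → ℝ} {s t : ℝ}

theorem intervalIntegrable (hst : s ≤ t) (hf : ACOn f f' s t) :
    IntervalIntegrable f' volume s t :=
  (intervalIntegrable_iff_integrableOn_Icc_of_le hst).mpr hf.1

theorem absolutelyContinuousOnInterval (hst : s ≤ t) (hf : ACOn f f' s t) :
    AbsolutelyContinuousOnInterval f s t := by
  have hint := (hf.intervalIntegrable hst).absolutelyContinuousOnInterval_intervalIntegral
    (c := s) left_mem_uIcc
  refine absolutelyContinuousOnInterval_of_dist_le_mul 1 hint fun x hx y hy => ?_
  rw [uIcc_of_le hst] at hx hy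
  rw [hf.2 x hx, hf.2 y hy, dist_add_left, NNReal.coe_one, one_mul]

theorem continuousOn (hst : s ≤ t) (hf : ACOn f f' s t) : ContinuousOn f (Icc s t) :=
  uIcc_of_le hst ▸ (hf.absolutelyContinuousOnInterval hst).continuousOn

theorem ae_hasDerivAt (hst : s ≤ t) (hf : ACOn f f' s t) :
    ∀ᵐ x ∂volume.restrict (Ioc s t), HasDerivAt f (f' x) x := by
  rw [← restrict_Ioo_eq_restrict_Ioc, ae_restrict_iff' measurableSet_Ioo]
  filter_upwards [(hf.intervalIntegrable hst).ae_hasDerivAt_integral] with x hderiv hx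
  have hprim := hderiv (uIcc_of_le hst ▸ Ioo_subset_Icc_self hx) s left_mem_uIcc
  refine (hprim.const_add (f s)).congr_of_eventuallyEq ?_
  filter_upwards [Icc_mem_nhds hx.1 hx.2] with y hy using hf.2 y hy

end ACOn

end AbsoluteContinuity

section PhiP

theorem phiP_eq_abs_rpow_mul (p x : ℝ) : PhiP p x = |x| ^ (p - 2) * x := by
  unfold PhiP
  split_ifs with hx <;> simp [hx]

@[simp]
theorem phiP_zero (p : ℝ) : PhiP p 0 = 0 := if_pos rfl

theorem phiP_mul_self {p : ℝ} (hp : p ≠ 0) (x : ℝ) : PhiP p x * x = |x| ^ p := by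
  rcases eq_or_ne x 0 with rfl | hx
  · simp [Real.zero_rpow hp]
  · rw [phiP_eq_abs_rpow_mul, mul_assoc, ← sq, ← sq_abs, ← Real.rpow_natCast,
      ← Real.rpow_add (abs_pos.mpr hx)]
    norm_num

theorem abs_phiP {p x : ℝ} (hx : x ≠ 0) : |PhiP p x| = |x| ^ (p - 1) := by
  rw [phiP_eq_abs_rpow_mul, abs_mul, abs_of_nonneg (by positivity),
    ← Real.rpow_add_one (abs_ne_zero.mpr hx)]
  ring_nf

theorem hasDerivAt_abs_rpow_phiP {p : ℝ} (hp : 1 < p) (x : ℝ) :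
    HasDerivAt (fun y : ℝ => |y| ^ p) (p * PhiP p x) x := by
  simpa only [phiP_eq_abs_rpow_mul, mul_assoc] using hasDerivAt_abs_rpow x hp

theorem contDiff_one_abs_rpow {p : ℝ} (hp : 1 < p) : ContDiff ℝ 1 fun x : ℝ => |x| ^ p := by
  simpa only [Real.norm_eq_abs] using contDiff_norm_rpow (E := ℝ) hp

theorem continuous_phiP {p : ℝ} (hp : 1 < p) : Continuous (PhiP p) := by
  have hderiv : deriv (fun y : ℝ => |y| ^ p) = fun y => p * PhiP p y :=
    funext fun y => (hasDerivAt_abs_rpow_phiP hp y).deriv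
  have hcont := (contDiff_one_abs_rpow hp).continuous_deriv le_rfl
  rw [hderiv] at hcont
  simpa [(zero_lt_one.trans hp).ne'] using hcont.const_mul p⁻¹

variable {p q : ℝ}

theorem abs_phiP_rpow_conj (hpq : p.HolderConjugate q) (x : ℝ) : |PhiP p x| ^ q = |x| ^ p := by
  rcases eq_or_ne x 0 with rfl | hx
  · simp [Real.zero_rpow hpq.ne_zero, Real.zero_rpow hpq.symm.ne_zero]
  · rw [abs_phiP hx, ← Real.rpow_mul (abs_nonneg x), hpq.sub_one_mul_conj]

theorem phiP_conj_phiP (hpq : p.HolderConjugate q) (x : ℝ) : PhiP q (PhiP p x) = x := by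
  rcases eq_or_ne x 0 with rfl | hx
  · simp
  · have hexp : (p - 1) * (q - 2) + (p - 2) = 0 := by linarith [hpq.sub_one_mul_conj]
    rw [phiP_eq_abs_rpow_mul q, abs_phiP hx, phiP_eq_abs_rpow_mul p,
      ← Real.rpow_mul (abs_nonneg x), ← mul_assoc, ← Real.rpow_add (abs_pos.mpr hx), hexp,
      Real.rpow_zero, one_mul]

theorem continuousOn_of_phiP {f : ℝ → ℝ} {s : Set ℝ} (hp : 1 < p)
    (hf : ContinuousOn (fun τ => PhiP p (f τ)) s) : ContinuousOn f s := by
  have hpq := Real.HolderConjugate.conjExponent hp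
  exact ((continuous_phiP hpq.symm.lt).comp_continuousOn hf).congr
    fun x _ => (phiP_conj_phiP hpq (f x)).symm

theorem absolutelyContinuousOnInterval_abs_rpow_of_phiP {f : ℝ → ℝ} {a b : ℝ} (hp : 1 < p)
    (hf : AbsolutelyContinuousOnInterval (fun τ => PhiP p (f τ)) a b) :
    AbsolutelyContinuousOnInterval (fun τ => |f τ| ^ p) a b := by
  have hpq := Real.HolderConjugate.conjExponent hp
  simpa only [abs_phiP_rpow_conj hpq] using absolutelyContinuousOnInterval_comp_of_locallyLipschitz
    (contDiff_one_abs_rpow hpq.symm.lt).locallyLipschitz hf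

theorem hasDerivAt_abs_rpow_of_phiP {f : ℝ → ℝ} {v x : ℝ} (hp : 1 < p)
    (hf : HasDerivAt (fun τ => PhiP p (f τ)) v x) :
    HasDerivAt (fun τ => |f τ| ^ p) (p / (p - 1) * f x * v) x := by
  have hpq : p.HolderConjugate (p / (p - 1)) := Real.HolderConjugate.conjExponent hp
  have hcomp := (hasDerivAt_abs_rpow_phiP hpq.symm.lt (PhiP p (f x))).comp x hf
  simpa only [Function.comp_def, abs_phiP_rpow_conj hpq, phiP_conj_phiP hpq] using hcomp

end PhiP

section BeesackDas

theorem lintegral_mul_le_weighted_rpow {α : Type*} [MeasurableSpace α] {μ : Measure α}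
    {f g m : α → ℝ≥0∞} (hf : AEMeasurable f μ) (hg : AEMeasurable g μ) (hm : AEMeasurable m μ)
    (hm0 : ∀ᵐ t ∂μ, m t ≠ 0 ∧ m t ≠ ⊤) {a b : ℝ} (ha : 0 < a) (hb : 0 < b) (hab : a + b = 1) :
    ∫⁻ t, f t * g t ∂μ ≤
      (∫⁻ t, f t ^ (1 / a) * m t ^ (-(b / a)) ∂μ) ^ a * (∫⁻ t, m t * g t ^ (1 / b) ∂μ) ^ b := by
  have hsplit : ∀ᵐ t ∂μ, f t * g t =
      (f t ^ (1 / a) * m t ^ (-(b / a))) ^ a * (m t * g t ^ (1 / b)) ^ b := by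
    filter_upwards [hm0] with t ht
    have hcancel : m t ^ (-b) * m t ^ b = 1 := by
      rw [← ENNReal.rpow_add _ _ ht.1 ht.2, neg_add_cancel, ENNReal.rpow_zero]
    calc
      f t * g t = f t * g t * (m t ^ (-b) * m t ^ b) := by rw [hcancel, mul_one]
      _ = f t * m t ^ (-b) * (m t ^ b * g t) := by ring
      _ = _ := by
        rw [ENNReal.mul_rpow_of_nonneg _ _ ha.le, ENNReal.mul_rpow_of_nonneg _ _ hb.le]
        simp only [← ENNReal.rpow_mul]
        rw [one_div_mul_cancel ha.ne', one_div_mul_cancel hb.ne', neg_mul,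
          div_mul_cancel₀ b ha.ne', ENNReal.rpow_one, ENNReal.rpow_one]
  rw [lintegral_congr_ae hsplit]
  exact ENNReal.lintegral_mul_norm_pow_le ((hf.pow_const _).mul (hm.pow_const _))
    (hm.mul (hg.pow_const _)) ha.le hb.le hab

variable {p l : ℝ}

theorem lintegral_le_rpow_mul_weighted_rpow {α : Type*} [MeasurableSpace α] {μ : Measure α}
    {U m : α → ℝ≥0∞} (hp : 1 < p) (hU : AEMeasurable U μ) (hm : AEMeasurable m μ)
    (hm0 : ∀ᵐ t ∂μ, m t ≠ 0 ∧ m t ≠ ⊤) :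
    ∫⁻ t, U t ∂μ ≤ (∫⁻ t, m t ^ (-(1 / (p - 1))) ∂μ) ^ ((p - 1) / p) *
      (∫⁻ t, m t * U t ^ p ∂μ) ^ (1 / p) := by
  have hp0 : p ≠ 0 := by linarith
  have hp1 : p - 1 ≠ 0 := by linarith
  have hexp : p⁻¹ / ((p - 1) / p) = (p - 1)⁻¹ := by field_simp
  simpa [hexp] using lintegral_mul_le_weighted_rpow (f := fun _ => 1) aemeasurable_const hU hm hm0
    (a := (p - 1) / p) (b := 1 / p) (div_pos (by linarith) (by linarith)) (by positivity)
    (by field_simp; ring)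

theorem lintegral_mul_rpow_mul_rpow_le {α : Type*} [MeasurableSpace α] {μ : Measure α}
    {Q U m W : α → ℝ≥0∞} {κ : ℝ} (hl0 : 0 < l) (hlp : l < p) (hQ : AEMeasurable Q μ)
    (hU : AEMeasurable U μ) (hm : AEMeasurable m μ) (hW : AEMeasurable W μ)
    (hm0 : ∀ᵐ t ∂μ, m t ≠ 0 ∧ m t ≠ ⊤) :
    ∫⁻ t, Q t * W t ^ (κ * l / p) * U t ^ (p - l) ∂μ ≤
      (∫⁻ t, Q t ^ (p / l) * m t ^ (-((p - l) / l)) * W t ^ κ ∂μ) ^ (l / p) *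
        (∫⁻ t, m t * U t ^ p ∂μ) ^ ((p - l) / p) := by
  have hp0 : 0 < p := hl0.trans hlp
  have hpl : 0 < p - l := sub_pos.mpr hlp
  have hQW : AEMeasurable (fun t => Q t * W t ^ (κ * l / p)) μ := hQ.mul (hW.pow_const _)
  have hweighted := lintegral_mul_le_weighted_rpow hQW (hU.pow_const (p - l)) hm hm0
    (div_pos hl0 hp0) (div_pos hpl hp0) (by field_simp; ring)
  have hdensity (t : α) : (Q t * W t ^ (κ * l / p)) ^ (1 / (l / p)) *
      m t ^ (-((p - l) / p / (l / p))) = Q t ^ (p / l) * m t ^ (-((p - l) / l)) * W t ^ κ := by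
    rw [ENNReal.mul_rpow_of_nonneg _ _ (by positivity), ← ENNReal.rpow_mul,
      div_div_div_cancel_right₀ hp0.ne', one_div_div,
      show κ * l / p * (p / l) = κ by field_simp, mul_right_comm]
  have henergy (t : α) : (U t ^ (p - l)) ^ (1 / ((p - l) / p)) = U t ^ p := by
    rw [← ENNReal.rpow_mul, one_div_div, mul_div_cancel₀ _ hpl.ne']
  simpa only [hdensity, henergy] using hweighted

theorem measurable_setLIntegral_Ioc (f : ℝ → ℝ≥0∞) (c : ℝ) :
    Measurable fun t => ∫⁻ σ in Ioc c t, f σ :=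
  Monotone.measurable fun _ _ hxy => lintegral_mono_set (Ioc_subset_Ioc_right hxy)

/-- The integrand of the Beesack–Das constant `BDK` with base point `c`, for extended non-negative
weights `Q` and `m`. -/
noncomputable def beesackDasDensity (p l : ℝ) (Q m : ℝ → ℝ≥0∞) (c t : ℝ) : ℝ≥0∞ :=
  Q t ^ (p / l) * m t ^ (-((p - l) / l)) * (∫⁻ σ in Ioc c t, m σ ^ (-(1 / (p - 1)))) ^ (p - 1)

theorem lintegral_beesackDasDensity_ne_top {q v : ℝ → ℝ} {c : ℝ} {S : Set ℝ} (hl0 : 0 < l)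
    (hlp : l < p) (hK : BDK p l q v c S < ⊤) :
    ∫⁻ t in S, beesackDasDensity p l (fun t => ENNReal.ofReal (q t))
      (fun t => ENNReal.ofReal (v t)) c t ≠ ⊤ := by
  intro htop
  have hp0 : 0 < p := hl0.trans hlp
  have hconst : ENNReal.ofReal (((p - l) / p) ^ ((p - l) / p)) ≠ 0 := by
    have := div_pos (sub_pos.mpr hlp) hp0
    simpa using Real.rpow_pos_of_pos this _
  have hBDK : BDK p l q v c S = ENNReal.ofReal (((p - l) / p) ^ ((p - l) / p)) * ⊤ ^ (l / p) := by
    rw [← htop]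
    rfl
  rw [hBDK, ENNReal.top_rpow_of_pos (div_pos hl0 hp0), ENNReal.mul_top hconst] at hK
  exact hK.ne rfl

variable {Q U m : ℝ → ℝ≥0∞} {c r : ℝ}

theorem setLIntegral_Ioc_rpow_le (hp : 1 < p) (hl0 : 0 ≤ l)
    (hU : AEMeasurable U (volume.restrict (Ioc c r)))
    (hm : AEMeasurable m (volume.restrict (Ioc c r)))
    (hm0 : ∀ᵐ t ∂volume.restrict (Ioc c r), m t ≠ 0 ∧ m t ≠ ⊤) {t : ℝ} (htr : t ≤ r) :
    (∫⁻ σ in Ioc c t, U σ) ^ l ≤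
      (∫⁻ σ in Ioc c t, m σ ^ (-(1 / (p - 1)))) ^ ((p - 1) * l / p) *
        (∫⁻ σ in Ioc c r, m σ * U σ ^ p) ^ (l / p) := by
  have hsub : Ioc c t ⊆ Ioc c r := Ioc_subset_Ioc_right htr
  have hholder := lintegral_le_rpow_mul_weighted_rpow hp (hU.mono_set hsub) (hm.mono_set hsub)
    (ae_restrict_of_ae_restrict_of_subset hsub hm0)
  have hrpow := ENNReal.rpow_le_rpow hholder hl0
  rw [ENNReal.mul_rpow_of_nonneg _ _ hl0, ← ENNReal.rpow_mul, ← ENNReal.rpow_mul,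
    div_mul_eq_mul_div, one_div_mul_eq_div] at hrpow
  exact hrpow.trans (by gcongr)

theorem lintegral_setLIntegral_rpow_mul_rpow_le (hp : 1 < p) (hl0 : 0 < l) (hlp : l < p) {s : ℝ}
    (hcs : c ≤ s) (hQ : AEMeasurable Q (volume.restrict (Ioc c r)))
    (hU : AEMeasurable U (volume.restrict (Ioc c r)))
    (hm : AEMeasurable m (volume.restrict (Ioc c r)))
    (hm0 : ∀ᵐ t ∂volume.restrict (Ioc c r), m t ≠ 0 ∧ m t ≠ ⊤) :
    ∫⁻ t in Ioc s r, Q t * (∫⁻ σ in Ioc c t, U σ) ^ l * U t ^ (p - l) ≤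
      (∫⁻ t in Ioc s r, beesackDasDensity p l Q m c t) ^ (l / p) *
        ∫⁻ t in Ioc c r, m t * U t ^ p := by
  have hp0 : 0 < p := by linarith
  have hsub : Ioc s r ⊆ Ioc c r := Ioc_subset_Ioc_left hcs
  set E := ∫⁻ t in Ioc c r, m t * U t ^ p
  set D := ∫⁻ t in Ioc s r, beesackDasDensity p l Q m c t
  let W := fun t => ∫⁻ σ in Ioc c t, m σ ^ (-(1 / (p - 1)))
  have hW : Measurable W := measurable_setLIntegral_Ioc _ c
  have hmeas : AEMeasurable (fun t => Q t * W t ^ ((p - 1) * l / p) * U t ^ (p - l))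
      (volume.restrict (Ioc s r)) :=
    ((hQ.mono_set hsub).mul (hW.pow_const _).aemeasurable).mul ((hU.mono_set hsub).pow_const _)
  calc ∫⁻ t in Ioc s r, Q t * (∫⁻ σ in Ioc c t, U σ) ^ l * U t ^ (p - l)
    _ ≤ ∫⁻ t in Ioc s r, E ^ (l / p) * (Q t * W t ^ ((p - 1) * l / p) * U t ^ (p - l)) := by
      refine setLIntegral_mono' measurableSet_Ioc fun t ht => ?_
      grw [setLIntegral_Ioc_rpow_le hp hl0.le hU hm hm0 ht.2]
      exact le_of_eq (by ring)
    _ = E ^ (l / p) * ∫⁻ t in Ioc s r, Q t * W t ^ ((p - 1) * l / p) * U t ^ (p - l) :=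
      lintegral_const_mul'' _ hmeas
    _ ≤ E ^ (l / p) * (D ^ (l / p) * (∫⁻ t in Ioc s r, m t * U t ^ p) ^ ((p - l) / p)) := by
      gcongr
      exact lintegral_mul_rpow_mul_rpow_le hl0 hlp (hQ.mono_set hsub) (hU.mono_set hsub)
        (hm.mono_set hsub) hW.aemeasurable (ae_restrict_of_ae_restrict_of_subset hsub hm0)
    _ ≤ E ^ (l / p) * (D ^ (l / p) * E ^ ((p - l) / p)) := by
      gcongr
      exact lintegral_mono_set hsub
    _ = D ^ (l / p) * E := by
      rw [mul_left_comm, ← ENNReal.rpow_add_of_nonneg _ _ (div_pos hl0 hp0).le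
        (div_pos (sub_pos.mpr hlp) hp0).le, ← add_div, add_sub_cancel, div_self hp0.ne',
        ENNReal.rpow_one]

theorem ACOn.enorm_le_lintegral {f f' : ℝ → ℝ} {s t x : ℝ} (hf : ACOn f f' s t) (hfs : f s = 0)
    (hx : x ∈ Icc s t) : ‖f x‖ₑ ≤ ∫⁻ σ in Ioc s x, ‖f' σ‖ₑ := by
  rw [hf.2 x hx, hfs, zero_add, intervalIntegral.integral_of_le hx.1]
  exact enorm_integral_le_lintegral_enorm _

theorem ACOn.lintegral_beesackDas_le (hp : 1 < p) (hl0 : 0 < l) (hlp : l < p) {u u' : ℝ → ℝ}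
    {s : ℝ} (hcs : c ≤ s) (hu : ACOn u u' c r) (huc : u c = 0)
    (hQ : AEMeasurable Q (volume.restrict (Ioc c r)))
    (hm : AEMeasurable m (volume.restrict (Ioc c r)))
    (hm0 : ∀ᵐ t ∂volume.restrict (Ioc c r), m t ≠ 0 ∧ m t ≠ ⊤) :
    ∫⁻ t in Ioc s r, Q t * ‖u t‖ₑ ^ l * ‖u' t‖ₑ ^ (p - l) ≤
      (∫⁻ t in Ioc s r, beesackDasDensity p l Q m c t) ^ (l / p) *
        ∫⁻ t in Ioc c r, m t * ‖u' t‖ₑ ^ p := by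
  have hu' := (hu.1.mono_set Ioc_subset_Icc_self).aestronglyMeasurable.enorm
  refine le_trans (setLIntegral_mono' measurableSet_Ioc fun t ht => ?_)
    (lintegral_setLIntegral_rpow_mul_rpow_le hp hl0 hlp hcs hQ hu' hm hm0)
  gcongr
  exact hu.enorm_le_lintegral huc ⟨hcs.trans ht.1.le, ht.2⟩

theorem ofReal_mul_abs_rpow (x y : ℝ) {e : ℝ} (he : 0 ≤ e) :
    ENNReal.ofReal (x * |y| ^ e) = ENNReal.ofReal x * ‖y‖ₑ ^ e := by
  rw [ENNReal.ofReal_mul' (by positivity), ← ENNReal.ofReal_rpow_of_nonneg (abs_nonneg y) he,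
    Real.enorm_eq_ofReal_abs]

theorem ACOn.integral_beesackDas_le (hp : 1 < p) (hl0 : 0 < l) (hlp : l < p)
    {q v u u' : ℝ → ℝ} {s : ℝ} (hcs : c ≤ s) (hu : ACOn u u' c r) (hus : ∀ t ∈ Icc c s, u t = 0)
    (hq : AEMeasurable q (volume.restrict (Ioc c r)))
    (hv : AEMeasurable v (volume.restrict (Ioc c r)))
    (hq0 : ∀ᵐ t ∂volume.restrict (Ioc c r), 0 ≤ q t)
    (hv0 : ∀ᵐ t ∂volume.restrict (Ioc c r), 0 < v t) {C : NNReal}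
    (hC : ∫⁻ t in Ioc s r, beesackDasDensity p l (fun t => ENNReal.ofReal (q t))
      (fun t => ENNReal.ofReal (v t)) c t ≤ C)
    (hqu : IntegrableOn (fun t => q t * |u t| ^ l * |u' t| ^ (p - l)) (Ioc c r))
    (hvu : IntegrableOn (fun t => v t * |u' t| ^ p) (Ioc c r)) :
    ∫ t in Ioc c r, q t * |u t| ^ l * |u' t| ^ (p - l) ≤
      C ^ (l / p) * ∫ t in Ioc c r, v t * |u' t| ^ p := by
  have hsub : Ioc s r ⊆ Ioc c r := Ioc_subset_Ioc_left hcs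
  have hqu0 : ∀ᵐ t ∂volume.restrict (Ioc s r), 0 ≤ q t * |u t| ^ l * |u' t| ^ (p - l) :=
    (ae_restrict_of_ae_restrict_of_subset hsub hq0).mono fun t ht => by positivity
  have hvu0 : ∀ᵐ t ∂volume.restrict (Ioc c r), 0 ≤ v t * |u' t| ^ p :=
    hv0.mono fun t ht => by positivity
  rw [setIntegral_eq_of_subset_of_forall_sdiff_eq_zero measurableSet_Ioc hsub fun t ht => by
      simp [hus t ⟨ht.1.1.le, not_lt.mp fun hst => ht.2 ⟨hst, ht.1.2⟩⟩, Real.zero_rpow hl0.ne'],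
    ← ENNReal.ofReal_le_ofReal_iff (mul_nonneg (by positivity) (integral_nonneg_of_ae hvu0)),
    ENNReal.ofReal_mul (by positivity),
    ofReal_integral_eq_lintegral_ofReal (hqu.mono_set hsub) hqu0,
    ofReal_integral_eq_lintegral_ofReal hvu hvu0,
    ← ENNReal.ofReal_rpow_of_nonneg C.coe_nonneg (by positivity), ENNReal.ofReal_coe_nnreal]
  simp only [ofReal_mul_abs_rpow _ _ hl0.le, ofReal_mul_abs_rpow _ _ (sub_pos.mpr hlp).le,
    ofReal_mul_abs_rpow _ _ (zero_lt_one.trans hp).le]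
  refine (hu.lintegral_beesackDas_le hp hl0 hlp hcs (hus c ⟨le_rfl, hcs⟩) hq.ennreal_ofReal
    hv.ennreal_ofReal (hv0.mono fun t ht => ⟨?_, ENNReal.ofReal_ne_top⟩)).trans ?_
  · simpa using ht
  · gcongr

end BeesackDas

section Energy

theorem contDiff_one_intervalIntegral {φ : ℝ → ℝ} (hφ : Continuous φ) (c : ℝ) :
    ContDiff ℝ 1 fun x => ∫ t in c..x, φ t := by
  have hderiv (x : ℝ) := (hφ.integral_hasStrictDerivAt c x).hasDerivAt
  refine contDiff_one_iff_deriv.mpr ⟨fun x => (hderiv x).differentiableAt, ?_⟩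
  rwa [funext fun x => (hderiv x).deriv]

/-- The energy `(1 - 1/p) a |u'|^p + ∫₀^u φ` of the function `u` at the point `τ`. -/
noncomputable def energy (p : ℝ) (φ a u u' : ℝ → ℝ) (τ : ℝ) : ℝ :=
  (p - 1) / p * (a τ * |u' τ| ^ p) + ∫ t in 0..u τ, φ t

/-- `u` solves `(a Φ_p(u'))' + (n - 1) (a/τ) Φ_p(u') - g + φ(u) = 0` a.e. on `(0, r]`, where `a`,
`u`, `Φ_p(u')` and `a Φ_p(u')` are absolutely continuous on `[0, r]` with derivatives `a'`, `u'`,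
`v'` and `w'`. A term `h(τ, u, u')` of the equation is encoded by its values `g τ` along `u`. -/
structure IsDivergentSolution (p n r : ℝ) (φ g a a' u u' v' w' : ℝ → ℝ) : Prop where
  acOn_coeff : ACOn a a' 0 r
  acOn : ACOn u u' 0 r
  acOn_phiP : ACOn (fun τ => PhiP p (u' τ)) v' 0 r
  acOn_flux : ACOn (fun τ => a τ * PhiP p (u' τ)) w' 0 r
  equation : ∀ᵐ τ ∂volume.restrict (Ioc 0 r),
    w' τ + (n - 1) * (a τ / τ) * PhiP p (u' τ) - g τ + φ (u τ) = 0

variable {p l n r θ : ℝ} {φ g a a' u u' v' w' q : ℝ → ℝ}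

theorem energy_zero_eq_zero (hp : p ≠ 0) (hu0 : u 0 = 0) (hdeg : a 0 = 0 ∨ u' 0 = 0) :
    energy p φ a u u' 0 = 0 := by
  rcases hdeg with h0 | h0 <;> simp [energy, hu0, h0, Real.zero_rpow hp]

theorem intervalIntegral_le_energy {τ : ℝ} (hp : 1 ≤ p) (ha : 0 ≤ a τ) :
    ∫ t in 0..u τ, φ t ≤ energy p φ a u u' τ :=
  le_add_of_nonneg_left (mul_nonneg (div_nonneg (sub_nonneg.mpr hp) (zero_le_one.trans hp))
    (mul_nonneg ha (by positivity)))

namespace IsDivergentSolution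

theorem continuousOn_deriv (hp : 1 < p) (hr : 0 ≤ r)
    (hu : IsDivergentSolution p n r φ g a a' u u' v' w') : ContinuousOn u' (Icc 0 r) :=
  continuousOn_of_phiP hp (hu.acOn_phiP.continuousOn hr)

theorem integrableOn_mul_rpow (hp : 1 < p) (hr : 0 ≤ r) (hl : 0 ≤ l) {e : ℝ} (he : 0 ≤ e)
    (hu : IsDivergentSolution p n r φ g a a' u u' v' w') (hq : IntegrableOn q (Ioc 0 r)) :
    IntegrableOn (fun τ => q τ * |u τ| ^ l * |u' τ| ^ e) (Ioc 0 r) := by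
  have hcu := (hu.acOn.continuousOn hr).abs.rpow_const fun _ _ => Or.inr hl
  have hcu' := (hu.continuousOn_deriv hp hr).abs.rpow_const fun _ _ => Or.inr he
  exact (hq.mul_continuousOn_of_subset hcu measurableSet_Ioc isCompact_Icc
    Ioc_subset_Icc_self).mul_continuousOn_of_subset hcu' measurableSet_Ioc isCompact_Icc
    Ioc_subset_Icc_self

theorem absolutelyContinuousOnInterval_energy (hp : 1 < p) (hr : 0 ≤ r) (hφ : Continuous φ)
    (hu : IsDivergentSolution p n r φ g a a' u u' v' w') :
    AbsolutelyContinuousOnInterval (energy p φ a u u') 0 r := by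
  have hkinetic : AbsolutelyContinuousOnInterval (fun τ => |u' τ| ^ p) 0 r :=
    absolutelyContinuousOnInterval_abs_rpow_of_phiP hp
      (hu.acOn_phiP.absolutelyContinuousOnInterval hr)
  have hpotential : AbsolutelyContinuousOnInterval (fun τ => ∫ t in 0..u τ, φ t) 0 r :=
    absolutelyContinuousOnInterval_comp_of_locallyLipschitz (g := fun x => ∫ t in 0..x, φ t)
      (contDiff_one_intervalIntegral hφ 0).locallyLipschitz
      (hu.acOn.absolutelyContinuousOnInterval hr)
  exact (((hu.acOn_coeff.absolutelyContinuousOnInterval hr).mul hkinetic).const_mul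
    ((p - 1) / p)).add hpotential

theorem ae_hasDerivAt_energy (hp : 1 < p) (hr : 0 ≤ r) (hφ : Continuous φ)
    (hu : IsDivergentSolution p n r φ g a a' u u' v' w') :
    ∀ᵐ τ ∂volume.restrict (Ioc 0 r),
      HasDerivAt (energy p φ a u u') (g τ * u' τ - dA n p a a' τ * |u' τ| ^ p) τ := by
  filter_upwards [hu.acOn_coeff.ae_hasDerivAt hr, hu.acOn.ae_hasDerivAt hr,
    hu.acOn_phiP.ae_hasDerivAt hr, hu.acOn_flux.ae_hasDerivAt hr, hu.equation,
    ae_restrict_mem measurableSet_Ioc] with τ hda hdu hdPhi hdflux hODE hτ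
  have hw : w' τ = a' τ * PhiP p (u' τ) + a τ * v' τ := hdflux.unique (hda.mul hdPhi)
  have hkinetic := (hda.mul (hasDerivAt_abs_rpow_of_phiP hp hdPhi)).const_mul ((p - 1) / p)
  have hpotential := (hφ.integral_hasStrictDerivAt 0 (u τ)).hasDerivAt.comp τ hdu
  refine (hkinetic.add hpotential).congr_deriv ?_
  have hp0 : p ≠ 0 := by linarith
  have hp1 : p - 1 ≠ 0 := by linarith
  have hτ0 : τ ≠ 0 := hτ.1.ne'
  have hg : g τ = w' τ + (n - 1) * (a τ / τ) * PhiP p (u' τ) + φ (u τ) := by linarith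
  rw [hg, hw, ← phiP_mul_self hp0, dA]
  field_simp
  ring

theorem energy_le (hp : 1 < p) (hr : 0 ≤ r) (hφ : Continuous φ)
    (hu : IsDivergentSolution p n r φ g a a' u u' v' w') (hE0 : energy p φ a u u' 0 = 0)
    (hq : IntegrableOn (fun τ => q τ * |u τ| ^ l * |u' τ| ^ (p - l)) (Ioc 0 r))
    (hv : IntegrableOn (fun τ => dA n p a a' τ * |u' τ| ^ p) (Ioc 0 r))
    (hgrowth : ∀ᵐ τ ∂volume.restrict (Ioc 0 r), g τ * u' τ ≤
      θ * q τ * |u τ| ^ l * |u' τ| ^ (p - l) + (1 - θ) * dA n p a a' τ * |u' τ| ^ p) :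
    energy p φ a u u' r ≤ θ * ((∫ τ in Ioc 0 r, q τ * |u τ| ^ l * |u' τ| ^ (p - l)) -
      ∫ τ in Ioc 0 r, dA n p a a' τ * |u' τ| ^ p) := by
  have hAC := hu.absolutelyContinuousOnInterval_energy hp hr hφ
  have hint := hAC.intervalIntegrable_deriv
  rw [intervalIntegrable_iff_integrableOn_Ioc_of_le hr] at hint
  have hFTC := hAC.integral_deriv_eq_sub
  rw [intervalIntegral.integral_of_le hr, hE0, sub_zero] at hFTC
  rw [← hFTC, ← integral_sub hq hv, ← integral_const_mul]
  refine integral_mono_ae hint ((hq.sub hv).const_mul θ) ?_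
  filter_upwards [hu.ae_hasDerivAt_energy hp hr hφ, hgrowth] with τ hderiv hτ
  rw [hderiv.deriv]
  linarith

theorem eq_zero_of_lintegral_beesackDasDensity_le_one (hp : 1 < p) (hl0 : 0 < l) (hlp : l < p)
    (hr : 0 < r) (hφ : Continuous φ) (hφsign : ∀ᵐ t : ℝ, 0 < t * φ t)
    (hu : IsDivergentSolution p n r φ g a a' u u' v' w') (hdeg : a 0 = 0 ∨ u' 0 = 0)
    (ha0 : ∀ᵐ τ ∂volume.restrict (Ioc 0 r), 0 ≤ a τ)
    (hv : IntegrableOn (dA n p a a') (Ioc 0 r))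
    (hv0 : ∀ᵐ τ ∂volume.restrict (Ioc 0 r), 0 < dA n p a a' τ)
    (hq : IntegrableOn q (Ioc 0 r)) (hq0 : ∀ᵐ τ ∂volume.restrict (Ioc 0 r), 0 ≤ q τ)
    (hθ : 0 ≤ θ)
    (hgrowth : ∀ᵐ τ ∂volume.restrict (Ioc 0 r), g τ * u' τ ≤
      θ * q τ * |u τ| ^ l * |u' τ| ^ (p - l) + (1 - θ) * dA n p a a' τ * |u' τ| ^ p)
    {s : ℝ} (hs : 0 ≤ s) (hus : ∀ t ∈ Icc 0 s, u t = 0)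
    (hsmall : ∫⁻ t in Ioc s r, beesackDasDensity p l (fun t => ENNReal.ofReal (q t))
      (fun t => ENNReal.ofReal (dA n p a a' t)) 0 t ≤ 1) :
    u r = 0 := by
  have hqu := hu.integrableOn_mul_rpow hp hr.le hl0.le (sub_pos.mpr hlp).le hq
  have hvu : IntegrableOn (fun τ => dA n p a a' τ * |u' τ| ^ p) (Ioc 0 r) := by
    simpa using hu.integrableOn_mul_rpow hp hr.le le_rfl (hl0.trans hlp).le hv
  have hBD := hu.acOn.integral_beesackDas_le hp hl0 hlp hs hus hq.aemeasurable hv.aemeasurable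
    hq0 hv0 (C := 1) (by simpa using hsmall) hqu hvu
  rw [NNReal.coe_one, Real.one_rpow, one_mul] at hBD
  have har : 0 ≤ a r :=
    nonneg_on_Icc_of_ae_nonneg hr (hu.acOn_coeff.continuousOn hr.le) ha0 r ⟨hr.le, le_rfl⟩
  have hE0 : energy p φ a u u' 0 = 0 :=
    energy_zero_eq_zero (hl0.trans hlp).ne' (hus 0 ⟨le_rfl, hs⟩) hdeg
  by_contra hne
  refine (intervalIntegral_zero_pos_of_ae_mul_pos hne (hφ.intervalIntegrable _ _) hφsign).not_ge ?_
  calc ∫ t in 0..u r, φ t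
    _ ≤ energy p φ a u u' r := intervalIntegral_le_energy hp.le har
    _ ≤ _ := hu.energy_le hp hr.le hφ hE0 hqu hvu hgrowth
    _ ≤ 0 := mul_nonpos_of_nonneg_of_nonpos hθ (sub_nonpos.mpr hBD)

end IsDivergentSolution

end Energy

theorem triviality_divergent_general
    (p l n : ℝ) (R : ℝ≥0∞) (hp : 1 < p) (hl0 : 0 < l) (hlp : l < p)
    (φ : ℝ → ℝ) (hφcont : Continuous φ) (hφsign : ∀ᵐ t : ℝ, 0 < t * φ t)
    (a a' : ℝ → ℝ)
    (haAC : ∀ r : ℝ, 0 < r → ENNReal.ofReal r < R → ACOn a a' 0 r)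
    (ha0 : ∀ᵐ τ ∂volume.restrict {τ : ℝ | 0 < τ ∧ ENNReal.ofReal τ < R}, 0 ≤ a τ)
    (hv0 : ∀ᵐ τ ∂volume.restrict {τ : ℝ | 0 < τ ∧ ENNReal.ofReal τ < R}, 0 < dA n p a a' τ)
    (hv : ∀ r : ℝ, 0 < r → ENNReal.ofReal r < R → IntegrableOn (dA n p a a') (Ioc 0 r))
    (q : ℝ → ℝ)
    (hq0 : ∀ᵐ τ ∂volume.restrict {τ : ℝ | 0 < τ ∧ ENNReal.ofReal τ < R}, 0 ≤ q τ)
    (hq : ∀ r : ℝ, 0 < r → ENNReal.ofReal r < R → IntegrableOn q (Ioc 0 r))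
    (hK : ∀ r : ℝ, 0 < r → ENNReal.ofReal r < R → BDK p l q (dA n p a a') 0 (Ioc 0 r) < ⊤)
    (g u u' v' w' : ℝ → ℝ)
    (huAC : ∀ r : ℝ, 0 < r → ENNReal.ofReal r < R → ACOn u u' 0 r)
    (hvAC : ∀ r : ℝ, 0 < r → ENNReal.ofReal r < R → ACOn (fun τ => PhiP p (u' τ)) v' 0 r)
    (hwAC : ∀ r : ℝ, 0 < r → ENNReal.ofReal r < R → ACOn (fun τ => a τ * PhiP p (u' τ)) w' 0 r)
    (hODE : ∀ᵐ τ ∂volume.restrict {τ : ℝ | 0 < τ ∧ ENNReal.ofReal τ < R},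
      w' τ + (n - 1) * (a τ / τ) * PhiP p (u' τ) - g τ + φ (u τ) = 0)
    (θ : ℝ) (hθ : 0 ≤ θ)
    (hgrowth : ∀ᵐ τ ∂volume.restrict {τ : ℝ | 0 < τ ∧ ENNReal.ofReal τ < R}, g τ * u' τ ≤
      θ * q τ * |u τ| ^ l * |u' τ| ^ (p - l) + (1 - θ) * dA n p a a' τ * |u' τ| ^ p)
    (hu0 : u 0 = 0) (hdeg : a 0 = 0 ∨ u' 0 = 0) :
    ∀ τ : ℝ, 0 ≤ τ → ENNReal.ofReal τ < R → u τ = 0 := by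
  intro τ hτ0 hτR
  rcases hτ0.eq_or_lt with rfl | hτ
  · exact hu0
  obtain ⟨δ, hδ, hsmall⟩ := exists_pos_forall_setLIntegral_Ioc_le
    (lintegral_beesackDasDensity_ne_top hl0 hlp (hK τ hτ hτR)) one_ne_zero
  refine forall_mem_Icc_of_uniform_step (P := fun x => u x = 0) hδ hu0
    (fun s hs x hx hxs hus => ?_) τ ⟨hτ0, le_rfl⟩
  have hx0 : 0 < x := hs.1.trans_lt hx.1
  have hxR : ENNReal.ofReal x < R := (ENNReal.ofReal_le_ofReal hx.2).trans_lt hτR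
  have hsub : Ioc 0 x ⊆ {τ : ℝ | 0 < τ ∧ ENNReal.ofReal τ < R} := fun y hy =>
    ⟨hy.1, (ENNReal.ofReal_le_ofReal hy.2).trans_lt hxR⟩
  have hsol : IsDivergentSolution p n x φ g a a' u u' v' w' :=
    ⟨haAC x hx0 hxR, huAC x hx0 hxR, hvAC x hx0 hxR, hwAC x hx0 hxR,
      ae_restrict_of_ae_restrict_of_subset hsub hODE⟩
  exact hsol.eq_zero_of_lintegral_beesackDasDensity_le_one hp hl0 hlp hx0 hφcont hφsign hdeg
    (ae_restrict_of_ae_restrict_of_subset hsub ha0) (hv x hx0 hxR)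
    (ae_restrict_of_ae_restrict_of_subset hsub hv0) (hq x hx0 hxR)
    (ae_restrict_of_ae_restrict_of_subset hsub hq0) hθ
    (ae_restrict_of_ae_restrict_of_subset hsub hgrowth) hs.1 hus (hsmall s x hs.1 hx.2 hxs)

/-- **Triviality (divergent form)**, Theorem 2 ii) of the paper. -/
theorem triviality_divergent
    (p l n : ℝ) (R : ℝ≥0∞)
    (hp : 1 < p) (hl0 : 0 < l) (hlp : l < p) (hn : 1 ≤ n) (hR : 0 < R)
    (φ : ℝ → ℝ) (hφcont : Continuous φ) (hφodd : ∀ t : ℝ, φ (-t) = -φ t)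
    (hφsign : ∀ᵐ τ ∂(volume : Measure ℝ), 0 < τ * φ τ)
    (a a' : ℝ → ℝ)
    (haAC : ∀ r : ℝ, 0 < r → ENNReal.ofReal r < R → ACOn a a' 0 r)
    (q : ℝ → ℝ) (hqmeas : Measurable q)
    (hapos : ∀ᵐ τ ∂(volume.restrict {τ : ℝ | 0 < τ ∧ ENNReal.ofReal τ < R}), 0 < a τ)
    (hvpos : ∀ᵐ τ ∂(volume.restrict {τ : ℝ | 0 < τ ∧ ENNReal.ofReal τ < R}), 0 < dA n p a a' τ)
    (hvint : ∀ r : ℝ, 0 < r → ENNReal.ofReal r < R →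
      IntegrableOn (dA n p a a') (Set.Ioc 0 r) ∧
        IntegrableOn (fun τ => dA n p a a' τ ^ (-(1 / (p - 1)))) (Set.Ioc 0 r))
    (hqint : ∀ r : ℝ, 0 < r → ENNReal.ofReal r < R → IntegrableOn q (Set.Ioc 0 r))
    (h : ℝ → ℝ → ℝ → ℝ)
    (hhmeas : ∀ lam₀ lam₁ : ℝ, Measurable fun τ => h τ lam₀ lam₁)
    (hhcont : ∀ τ : ℝ, Continuous fun z : ℝ × ℝ => h τ z.1 z.2)
    (θ : ℝ) (hθ0 : 0 < θ) (hθ1 : θ ≤ 1)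
    (hq0 : ∀ᵐ τ ∂(volume.restrict {τ : ℝ | 0 < τ ∧ ENNReal.ofReal τ < R}), 0 ≤ q τ)
    (hgrowth : ∀ᵐ τ ∂(volume.restrict {τ : ℝ | 0 < τ ∧ ENNReal.ofReal τ < R}),
      ∀ lam₀ lam₁ : ℝ, h τ lam₀ lam₁ * lam₁ ≤
        θ * q τ * |lam₀| ^ l * |lam₁| ^ (p - l) + (1 - θ) * dA n p a a' τ * |lam₁| ^ p)
    (hK : ∀ r : ℝ, 0 < r → ENNReal.ofReal r < R →
      BDK p l q (dA n p a a') 0 (Set.Ioc 0 r) < ⊤)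
    (u u' v' w' : ℝ → ℝ)
    (huAC : ∀ r : ℝ, 0 < r → ENNReal.ofReal r < R → ACOn u u' 0 r)
    (hvAC : ∀ r : ℝ, 0 < r → ENNReal.ofReal r < R →
      ACOn (fun τ => PhiP p (u' τ)) v' 0 r)
    (hwAC : ∀ r : ℝ, 0 < r → ENNReal.ofReal r < R →
      ACOn (fun τ => a τ * PhiP p (u' τ)) w' 0 r)
    (hu0 : u 0 = 0)
    (hODE : ∀ᵐ τ ∂(volume.restrict {τ : ℝ | 0 < τ ∧ ENNReal.ofReal τ < R}),
      w' τ + (n - 1) * (a τ / τ) * PhiP p (u' τ)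
        - h τ (u τ) (u' τ) + φ (u τ) = 0)
    (hdeg : a 0 = 0 ∨ u' 0 = 0) :
    ∀ τ : ℝ, 0 ≤ τ → ENNReal.ofReal τ < R → u τ = 0 := by
  exact triviality_divergent_general p l n R hp hl0 hlp φ hφcont hφsign a a' haAC
    (hapos.mono fun _ h => h.le) hvpos (fun r h0 hr => (hvint r h0 hr).1) q hq0 hqint hK
    (fun τ => h τ (u τ) (u' τ)) u u' v' w' huAC hvAC hwAC hODE θ hθ0.le
    (hgrowth.mono fun _ H => H _ _) hu0 hdeg
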